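/- Let h = (I, E) be a hypergraph with |I| = d and let χ_d(h) be the polynomial that for positive integers m counts the proper colorings of h with m colors. Then for every positive integer m, (-1)^d χ_d(h)(-m) equals the number of compatible pairs (σ, c) of an acyclic heading σ of h and a (not necessarily proper) coloring c of h with m colors. In particular, the number of acyclic headings of h equals (-1)^d χ_d(h)(-1). -/

import Mathlib

open Set Pointwise
open scoped Classical

noncomputable section

/-- The pairing of a direction `y` with a point `x`: `y(x) = ∑ i, y i * x i`. -/
def evalDir {I : Type*} [Fintype I] (y x : I → ℝ) : ℝ := ∑ i, y i * x i

/-- A polytope is the convex hull of a nonempty finite set of points. -/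
def IsPolytope {I : Type*} [Fintype I] (P : Set (I → ℝ)) : Prop :=
  ∃ V : Finset (I → ℝ), V.Nonempty ∧ P = convexHull ℝ (V : Set (I → ℝ))

/-- The `y`-maximal face of `P`. -/
def maxFace {I : Type*} [Fintype I] (P : Set (I → ℝ)) (y : I → ℝ) : Set (I → ℝ) :=
  {x ∈ P | ∀ x' ∈ P, evalDir y x' ≤ evalDir y x}

/-- The simplex `Δ_e = conv{ b_i : i ∈ e }` of a hyperedge `e`. -/
def hgSimplex {I : Type*} [Fintype I] [DecidableEq I] (e : Finset I) : Set (I → ℝ) :=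
  convexHull ℝ ((fun i => Pi.single i (1 : ℝ)) '' (e : Set I))

/-- The hypergraphic polytope of the hypergraph with hyperedges `edges a`, `a : ι`:
the Minkowski sum `Σ_a Δ_{edges a}`. -/
def hgPolytope {I : Type*} [Fintype I] [DecidableEq I] {ι : Type*} [Fintype ι]
    (edges : ι → Finset I) : Set (I → ℝ) :=
  {x | ∃ f : ι → I → ℝ, (∀ a, f a ∈ hgSimplex (edges a)) ∧ x = ∑ a, f a}

/-- A heading of a hypergraph: a choice of a head `σ e ∈ e` for every hyperedge `e`. -/
def IsHeading {I : Type*} {ι : Type*} (edges : ι → Finset I) (σ : ι → I) : Prop :=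
  ∀ a, σ a ∈ edges a

/-- A heading contains an oriented cycle `e_1, …, e_ℓ` if `σ(e_j) ∈ e_{j+1} \ {σ(e_{j+1})}`
cyclically (indices mod `ℓ`). -/
def HasOrientedCycle {I : Type*} {ι : Type*} (edges : ι → Finset I) (σ : ι → I) : Prop :=
  ∃ (ℓ : ℕ) (a : ℕ → ι), 0 < ℓ ∧
    ∀ j < ℓ, σ (a j) ∈ edges (a ((j + 1) % ℓ)) ∧ σ (a j) ≠ σ (a ((j + 1) % ℓ))

/-- An acyclic heading: a heading with no oriented cycle. -/
def IsAcyclicHeading {I : Type*} {ι : Type*} (edges : ι → Finset I) (σ : ι → I) : Prop :=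
  IsHeading edges σ ∧ ¬ HasOrientedCycle edges σ

/-- The in-degree vector `δ(σ)` of a heading: `δ(σ)_i` is the number of hyperedges with
head `i`. -/
def inDegVec {I : Type*} [DecidableEq I] {ι : Type*} [Fintype ι] (σ : ι → I) : I → ℝ :=
  fun i => ((Finset.univ.filter fun a => σ a = i).card : ℝ)

/-- A coloring `c` of a hypergraph is proper if every hyperedge has a unique maximal node. -/
def IsProperColoring {I : Type*} {ι : Type*} (edges : ι → Finset I) (c : I → ℕ) : Prop :=
  ∀ a, ∃! i, i ∈ edges a ∧ ∀ j ∈ edges a, c j ≤ c i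

/-- A heading `σ` and a coloring `c` are compatible if, for every hyperedge, the head
carries the maximal color of the hyperedge. -/
def Compatible {I : Type*} {ι : Type*} (edges : ι → Finset I) (σ : ι → I) (c : I → ℕ) :
    Prop :=
  ∀ a, ∀ j ∈ edges a, c j ≤ c (σ a)

/-!
Removing the nodes of top color from a strict order-reversing coloring with `n + 1` colors leaves
one with `n` colors, and the removed nodes form an arbitrary set of minimal nodes. Hence the number
`f n U` of strict colorings of `U` satisfies `f (n + 1) U = ∑ A ⊆ min U, f n (U \ A)`. By
inclusion-exclusion the weak colorings, counted at `-n` with the sign `(-1) ^ |U|`, continue this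
recursion to all integers `n`, and its solutions on `ℤ` are polynomial in `n`. This is Stanley's
reciprocity for order polynomials. A proper coloring is strict for exactly one acyclic heading,
whose heads are the nodes of maximal color, and compatible colorings of an acyclic heading are its
weak colorings; so `χ` is the sum of the order polynomials of the acyclic headings, and
reciprocity holds term by term.
-/

open Polynomial in
lemma exists_polynomial_comp_X_add_one_sub {K : Type*} [Field K] [CharZero K] (g : K[X]) :
    ∃ p : K[X], p.comp (X + 1) - p = g := by
  induction g using Polynomial.induction_on' with
  | add g₁ g₂ h₁ h₂ =>
    obtain ⟨p₁, rfl⟩ := h₁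
    obtain ⟨p₂, rfl⟩ := h₂
    exact ⟨p₁ + p₂, by rw [add_comp]; ring⟩
  | monomial n a =>
    have hB := congrArg (Polynomial.map (algebraMap ℚ K))
      (Polynomial.bernoulli_comp_one_add_X (n + 1))
    simp only [Polynomial.map_comp, Polynomial.map_add, Polynomial.map_one, map_X, add_comm 1 X,
      nsmul_eq_mul, Polynomial.map_mul, Polynomial.map_pow,
      Polynomial.map_natCast, add_tsub_cancel_right] at hB
    have hn : (n + 1 : K) ≠ 0 := n.cast_add_one_ne_zero
    refine ⟨C (a / (n + 1)) * (Polynomial.bernoulli (n + 1)).map (algebraMap ℚ K), ?_⟩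
    rw [mul_comp, C_comp, hB, ← mul_sub, add_sub_cancel_left, ← C_eq_natCast,
      ← mul_assoc, ← C_mul, Nat.cast_add_one, div_mul_cancel₀ a hn, C_mul_X_pow_eq_monomial]

lemma exists_polynomial_of_add_one_eq_add {K : Type*} [Field K] [CharZero K] {f : ℤ → K}
    (g : Polynomial K) (hf : ∀ n : ℤ, f (n + 1) = f n + g.eval (n : K)) :
    ∃ p : Polynomial K, ∀ n : ℤ, p.eval (n : K) = f n := by
  obtain ⟨q, hq⟩ := exists_polynomial_comp_X_add_one_sub g
  have hstep (n : ℤ) : q.eval ((n + 1 : ℤ) : K) - f (n + 1) = q.eval (n : K) - f n := by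
    rw [hf, ← hq]
    simp only [Int.cast_add, Int.cast_one, Polynomial.eval_sub, Polynomial.eval_comp,
      Polynomial.eval_add, Polynomial.eval_X, Polynomial.eval_one]
    ring
  refine ⟨q - Polynomial.C (q.eval 0 - f 0), fun n => ?_⟩
  suffices q.eval (n : K) - f n = q.eval 0 - f 0 by
    simp only [Polynomial.eval_sub, Polynomial.eval_C, ← this, sub_sub_cancel]
  induction n using Int.induction_on with
  | zero => simp
  | succ n ih => rw [hstep, ih]
  | pred n ih => rw [← ih, ← hstep, sub_add_cancel]

lemma exists_polynomial_of_sum_powerset {K α : Type*} [Field K] [CharZero K]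
    {f : ℤ → Finset α → K} {M : Finset α → Finset α} (hM : ∀ U, M U ⊆ U)
    (hf : ∀ n U, f (n + 1) U = ∑ A ∈ (M U).powerset, f n (U \ A)) (U : Finset α) :
    ∃ p : Polynomial K, ∀ n : ℤ, p.eval (n : K) = f n U := by
  induction U using Finset.strongInduction with
  | H U ih =>
    have hlt (A : Finset α) (hA : A ∈ (M U).powerset.erase ∅) : U \ A ⊂ U := by
      obtain ⟨hne, hsub⟩ := Finset.mem_erase.1 hA
      exact Finset.sdiff_ssubset ((Finset.mem_powerset.1 hsub).trans (hM U))
        (Finset.nonempty_iff_ne_empty.2 hne)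
    choose! p hp using fun A hA => ih (U \ A) (hlt A hA)
    refine exists_polynomial_of_add_one_eq_add (∑ A ∈ (M U).powerset.erase ∅, p A) fun n => ?_
    rw [hf, ← Finset.add_sum_erase _ _ (Finset.empty_mem_powerset _), Finset.sdiff_empty,
      Polynomial.eval_finsetSum, Finset.sum_congr rfl fun A hA => hp A hA n]

lemma polynomial_eq_of_eval_natCast_eq {R : Type*} [CommRing R] [IsDomain R] [CharZero R]
    {p q : Polynomial R} (h : ∀ m : ℕ, 0 < m → p.eval (m : R) = q.eval (m : R)) : p = q := by
  refine Polynomial.eq_of_infinite_eval_eq p q ?_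
  refine ((Set.Ioi_infinite 0).image Nat.cast_injective.injOn).mono ?_
  rintro _ ⟨m, hm, rfl⟩
  exact h m hm

section OrderPolynomial

variable {α : Type*} (r : α → α → Prop)

/-- The `r`-minimal elements of `U`. In an order-reversing coloring of `U` they are the nodes that
may carry the top color. -/
def relMinimals (U : Finset α) : Finset α := U.filter fun i => ∀ j ∈ U, ¬ r j i

/-- The order-reversing colorings of `U` with colors in `V`, where `r i j` forces `R (c j) (c i)`:
strict ones for `R = (· < ·)`, weak ones for `R = (· ≤ ·)`. Nodes outside `U` are given the junk
color `0`. -/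
def antiColorings [Fintype α] (R : ℕ → ℕ → Prop) (V : Finset ℕ) (U : Finset α) :
    Finset (α → ℕ) :=
  (Fintype.piFinset fun i => if i ∈ U then V else {0}).filter
    fun c => ∀ i ∈ U, ∀ j ∈ U, r i j → R (c j) (c i)

variable {r}

lemma mem_relMinimals {U : Finset α} {i : α} :
    i ∈ relMinimals r U ↔ i ∈ U ∧ ∀ j ∈ U, ¬ r j i := by
  simp [relMinimals]

lemma relMinimals_subset (U : Finset α) : relMinimals r U ⊆ U := Finset.filter_subset _ _

variable [Fintype α] {R : ℕ → ℕ → Prop} {V : Finset ℕ} {U A : Finset α} {c : α → ℕ} {t : ℕ}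

lemma mem_antiColorings :
    c ∈ antiColorings r R V U ↔ (∀ i ∈ U, c i ∈ V) ∧ (∀ i ∉ U, c i = 0) ∧
      ∀ i ∈ U, ∀ j ∈ U, r i j → R (c j) (c i) := by
  have (i : α) : c i ∈ (if i ∈ U then V else {0}) ↔ (i ∈ U → c i ∈ V) ∧ (i ∉ U → c i = 0) := by
    split_ifs with hi <;> simp [hi]
  simp only [antiColorings, Finset.mem_filter, Fintype.mem_piFinset, this, forall_and, and_assoc]

lemma antiColorings_empty_colors (R : ℕ → ℕ → Prop) (U : Finset α) :
    antiColorings r R ∅ U = if U = ∅ then {0} else ∅ := by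
  ext c
  split_ifs with hU
  · simp [hU, mem_antiColorings, funext_iff]
  · obtain ⟨i, hi⟩ := Finset.nonempty_iff_ne_empty.2 hU
    simpa [mem_antiColorings] using fun h => absurd hi (h i)

lemma piecewise_const_mem_antiColorings (hA : A ⊆ relMinimals r U) (ht : ∀ x ∈ V, R x t)
    (hc : c ∈ antiColorings r R V (U \ A)) :
    A.piecewise (fun _ => t) c ∈ antiColorings r R (insert t V) U := by
  obtain ⟨hV, h0, hr⟩ := mem_antiColorings.1 hc
  refine mem_antiColorings.2 ⟨fun i hi => ?_, fun i hi => ?_, fun i hi j hj hij => ?_⟩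
  · by_cases hiA : i ∈ A
    · simp [hiA]
    · simp [hiA, hV i (Finset.mem_sdiff.2 ⟨hi, hiA⟩)]
  · have hiA : i ∉ A := fun h => hi (relMinimals_subset U (hA h))
    simp [hiA, h0 i (fun h => hi (Finset.mem_sdiff.1 h).1)]
  · have hjA : j ∉ A := fun h => (mem_relMinimals.1 (hA h)).2 i hi hij
    have hjU : j ∈ U \ A := Finset.mem_sdiff.2 ⟨hj, hjA⟩
    by_cases hiA : i ∈ A
    · simpa [hiA, hjA] using ht _ (hV j hjU)
    · simpa [hiA, hjA] using hr i (Finset.mem_sdiff.2 ⟨hi, hiA⟩) j hjU hij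

lemma piecewise_zero_mem_antiColorings {W : Finset ℕ} (hc : c ∈ antiColorings r R W U)
    (hV : ∀ i ∈ U \ A, c i ∈ V) : A.piecewise (fun _ => 0) c ∈ antiColorings r R V (U \ A) := by
  obtain ⟨-, h0, hr⟩ := mem_antiColorings.1 hc
  refine mem_antiColorings.2 ⟨fun i hi => ?_, fun i hi => ?_, fun i hi j hj hij => ?_⟩
  · simpa [(Finset.mem_sdiff.1 hi).2] using hV i hi
  · by_cases hiA : i ∈ A
    · simp [hiA]
    · simp [hiA, h0 i fun h => hi (Finset.mem_sdiff.2 ⟨h, hiA⟩)]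
  · obtain ⟨hiU, hiA⟩ := Finset.mem_sdiff.1 hi
    obtain ⟨hjU, hjA⟩ := Finset.mem_sdiff.1 hj
    simpa [hiA, hjA] using hr i hiU j hjU hij

lemma card_antiColorings_sdiff (hA : A ⊆ relMinimals r U) (ht : ∀ x ∈ V, R x t) :
    (antiColorings r R V (U \ A)).card =
      ((antiColorings r R (insert t V) U).filter
        fun c => (∀ i ∈ A, c i = t) ∧ ∀ i ∈ U \ A, c i ∈ V).card := by
  refine Finset.card_nbij' (fun c => A.piecewise (fun _ => t) c)
    (fun c => A.piecewise (fun _ => 0) c)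
    (fun c hc => ?_) (fun c hc => ?_) (fun c hc => ?_) (fun c hc => ?_)
  · refine Finset.mem_filter.2 ⟨piecewise_const_mem_antiColorings hA ht hc, fun i hi => ?_,
      fun i hi => ?_⟩
    · simp [hi]
    · simpa [(Finset.mem_sdiff.1 hi).2] using (mem_antiColorings.1 hc).1 i hi
  · obtain ⟨hc, -, hV⟩ := Finset.mem_filter.1 hc
    exact piecewise_zero_mem_antiColorings hc hV
  · obtain ⟨-, h0, -⟩ := mem_antiColorings.1 hc
    funext i
    by_cases hi : i ∈ A <;> simp [hi, h0]
  · obtain ⟨-, hA, -⟩ := Finset.mem_filter.1 hc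
    funext i
    by_cases hi : i ∈ A <;> simp [hi, hA]

lemma card_strict_antiColorings_succ (m : ℕ) (U : Finset α) :
    (antiColorings r (· < ·) (Finset.Icc 1 (m + 1)) U).card =
      ∑ A ∈ (relMinimals r U).powerset,
        (antiColorings r (· < ·) (Finset.Icc 1 m) (U \ A)).card := by
  have htop : ∀ c ∈ antiColorings r (· < ·) (Finset.Icc 1 (m + 1)) U,
      U.filter (fun i => c i = m + 1) ∈ (relMinimals r U).powerset := by
    intro c hc
    obtain ⟨hV, -, hr⟩ := mem_antiColorings.1 hc
    refine Finset.mem_powerset.2 fun i hi => ?_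
    obtain ⟨hiU, hi⟩ := Finset.mem_filter.1 hi
    refine mem_relMinimals.2 ⟨hiU, fun j hj hji => ?_⟩
    have hlt : c i < c j := hr j hj i hiU hji
    have hle := (Finset.mem_Icc.1 (hV j hj)).2
    omega
  rw [Finset.card_eq_sum_card_fiberwise htop]
  refine Finset.sum_congr rfl fun A hA => ?_
  rw [Finset.mem_powerset] at hA
  rw [card_antiColorings_sdiff (t := m + 1) hA (fun x hx => by grind),
    Finset.insert_Icc_right_eq_Icc_add_one (by omega)]
  refine congrArg Finset.card (Finset.filter_congr fun c hc => ?_)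
  have hV := (mem_antiColorings.1 hc).1
  have hAU := hA.trans (relMinimals_subset U)
  constructor
  · rintro rfl
    grind
  · rintro ⟨hAt, hAV⟩
    grind

lemma weak_antiColorings_eq_filter (hr : WellFounded r) (m : ℕ) (U : Finset α) :
    antiColorings r (· ≤ ·) (Finset.Icc 1 m) U =
      (antiColorings r (· ≤ ·) (Finset.Icc 1 (m + 1)) U).filter
        fun c => (relMinimals r U).filter (fun i => c i = m + 1) = ∅ := by
  ext c
  simp only [Finset.mem_filter, Finset.filter_eq_empty_iff, mem_antiColorings]
  constructor
  · rintro ⟨hV, h0, hle⟩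
    refine ⟨⟨fun i hi => ?_, h0, hle⟩, fun i hi => ?_⟩
    · exact Finset.Icc_subset_Icc_right m.le_succ (hV i hi)
    · exact ((Finset.mem_Icc.1 (hV i (relMinimals_subset U hi))).2.trans_lt m.lt_succ_self).ne
  · rintro ⟨⟨hV, h0, hle⟩, hmin⟩
    suffices htop : ∀ i ∈ U, c i ≠ m + 1 from
      ⟨fun i hi => by have := hV i hi; have := htop i hi; grind, h0, hle⟩
    by_contra! htop
    obtain ⟨i, ⟨hi, hci⟩, hilow⟩ := hr.has_min {i | i ∈ U ∧ c i = m + 1} htop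
    refine hmin (mem_relMinimals.2 ⟨hi, fun j hj hji => hilow j ⟨hj, ?_⟩ hji⟩) hci
    exact le_antisymm (Finset.mem_Icc.1 (hV j hj)).2 (hci ▸ hle j hj i hi hji)

lemma card_weak_antiColorings_sdiff (hA : A ⊆ relMinimals r U) (m : ℕ) :
    (antiColorings r (· ≤ ·) (Finset.Icc 1 (m + 1)) (U \ A)).card =
      ((antiColorings r (· ≤ ·) (Finset.Icc 1 (m + 1)) U).filter
        fun c => ∀ i ∈ A, c i = m + 1).card := by
  rw [card_antiColorings_sdiff (t := m + 1) hA fun x hx => (Finset.mem_Icc.1 hx).2,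
    Finset.insert_eq_of_mem (Finset.right_mem_Icc.2 (by omega))]
  refine congrArg Finset.card (Finset.filter_congr fun c hc => and_iff_left fun i hi => ?_)
  exact (mem_antiColorings.1 hc).1 i (Finset.mem_sdiff.1 hi).1

-- Inclusion-exclusion over the set of minimal nodes that carry the top color `m + 1`.
lemma card_weak_antiColorings (hr : WellFounded r) (m : ℕ) (U : Finset α) :
    ((antiColorings r (· ≤ ·) (Finset.Icc 1 m) U).card : ℤ) =
      ∑ A ∈ (relMinimals r U).powerset,
        (-1) ^ A.card * ((antiColorings r (· ≤ ·) (Finset.Icc 1 (m + 1)) (U \ A)).card : ℤ) := by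
  set W := antiColorings r (· ≤ ·) (Finset.Icc 1 (m + 1)) U
  set M := relMinimals r U
  have hpow (c : α → ℕ) :
      (M.filter fun i => c i = m + 1).powerset =
        M.powerset.filter fun A => ∀ i ∈ A, c i = m + 1 := by
    ext A
    simp only [Finset.mem_powerset, Finset.mem_filter, Finset.subset_iff, ← forall_and]
  calc ((antiColorings r (· ≤ ·) (Finset.Icc 1 m) U).card : ℤ)
      = ∑ c ∈ W, if M.filter (fun i => c i = m + 1) = ∅ then 1 else 0 := by
        rw [weak_antiColorings_eq_filter hr, Finset.card_filter, Nat.cast_sum]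
        simp only [Nat.cast_ite, Nat.cast_one, Nat.cast_zero, W, M]
    _ = ∑ c ∈ W, ∑ A ∈ M.powerset, if ∀ i ∈ A, c i = m + 1 then (-1) ^ A.card else 0 := by
        simp only [← Finset.sum_powerset_neg_one_pow_card, hpow, Finset.sum_filter]
    _ = ∑ A ∈ M.powerset, ∑ c ∈ W, if ∀ i ∈ A, c i = m + 1 then (-1) ^ A.card else 0 :=
        Finset.sum_comm
    _ = _ := by
        refine Finset.sum_congr rfl fun A hA => ?_
        rw [card_weak_antiColorings_sdiff (Finset.mem_powerset.1 hA), ← Finset.sum_filter,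
          Finset.sum_const, nsmul_eq_mul, mul_comm]

/-- The values at all integers of the polynomial counting strict order-reversing colorings of `U`:
for `m : ℕ`, the strict ones with `m` colors are counted at `m` and, up to the sign
`(-1) ^ U.card`, the weak ones with `m` colors at `-m`. -/
def antiColoringCount (r : α → α → Prop) : ℤ → Finset α → ℤ
  | Int.ofNat m, U => (antiColorings r (· < ·) (Finset.Icc 1 m) U).card
  | Int.negSucc m, U =>
    (-1) ^ U.card * (antiColorings r (· ≤ ·) (Finset.Icc 1 (m + 1)) U).card

lemma antiColoringCount_natCast (m : ℕ) (U : Finset α) :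
    antiColoringCount r m U = (antiColorings r (· < ·) (Finset.Icc 1 m) U).card := rfl

lemma antiColoringCount_neg_natCast (m : ℕ) (U : Finset α) :
    antiColoringCount r (-m) U =
      (-1) ^ U.card * (antiColorings r (· ≤ ·) (Finset.Icc 1 m) U).card := by
  cases m with
  | succ m => rfl
  | zero =>
    rw [Nat.cast_zero, neg_zero, ← Nat.cast_zero, antiColoringCount_natCast,
      Finset.Icc_eq_empty (by norm_num), antiColorings_empty_colors, antiColorings_empty_colors]
    split_ifs with hU <;> simp [hU]

lemma antiColoringCount_add_one (hr : WellFounded r) (n : ℤ) (U : Finset α) :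
    antiColoringCount r (n + 1) U =
      ∑ A ∈ (relMinimals r U).powerset, antiColoringCount r n (U \ A) := by
  obtain ⟨m, rfl | rfl⟩ : ∃ m : ℕ, n = m ∨ n = -(m + 1 : ℕ) := by
    cases n with
    | ofNat m => exact ⟨m, .inl rfl⟩
    | negSucc m => exact ⟨m, .inr rfl⟩
  · simp only [← Nat.cast_add_one, antiColoringCount_natCast, card_strict_antiColorings_succ,
      Nat.cast_sum]
  · rw [show -((m + 1 : ℕ) : ℤ) + 1 = -m by push_cast; ring, antiColoringCount_neg_natCast,
      card_weak_antiColorings hr, Finset.mul_sum]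
    refine Finset.sum_congr rfl fun A hA => ?_
    have hAU : A ⊆ U := (Finset.mem_powerset.1 hA).trans (relMinimals_subset U)
    have hsign : (-1 : ℤ) ^ U.card * (-1) ^ A.card = (-1) ^ (U \ A).card := by
      rw [← Finset.card_sdiff_add_card_eq_card hAU, pow_add, mul_assoc, ← mul_pow, neg_one_mul,
        neg_neg, one_pow, mul_one]
    rw [antiColoringCount_neg_natCast, ← mul_assoc, hsign]

theorem exists_orderPolynomial (K : Type*) [Field K] [CharZero K] (hr : WellFounded r) :
    ∃ p : Polynomial K, ∀ m : ℕ,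
      p.eval (m : K) =
        Set.ncard {c : α → ℕ | (∀ i, c i ∈ Finset.Icc 1 m) ∧ ∀ i j, r i j → c j < c i} ∧
      (-1) ^ Fintype.card α * p.eval (-(m : K)) =
        Set.ncard {c : α → ℕ | (∀ i, c i ∈ Finset.Icc 1 m) ∧ ∀ i j, r i j → c j ≤ c i} := by
  have hcard (R : ℕ → ℕ → Prop) (m : ℕ) :
      Set.ncard {c : α → ℕ | (∀ i, c i ∈ Finset.Icc 1 m) ∧ ∀ i j, r i j → R (c j) (c i)} =
        (antiColorings r R (Finset.Icc 1 m) Finset.univ).card := by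
    rw [← Set.ncard_coe_finset]
    congr 1
    ext c
    simp [mem_antiColorings]
  obtain ⟨p, hp⟩ := exists_polynomial_of_sum_powerset
    (f := fun n U => (antiColoringCount r n U : K)) relMinimals_subset
    (fun n U => by rw [antiColoringCount_add_one hr, Int.cast_sum]) Finset.univ
  refine ⟨p, fun m => ⟨?_, ?_⟩⟩
  · rw [hcard (· < ·), ← Int.cast_natCast m, hp, antiColoringCount_natCast, Int.cast_natCast]
  · rw [hcard (· ≤ ·), ← Int.cast_natCast m, ← Int.cast_neg, hp, antiColoringCount_neg_natCast,
      Finset.card_univ]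
    push_cast
    rw [← mul_assoc, ← mul_pow, neg_one_mul, neg_neg, one_pow, one_mul]

end OrderPolynomial

section Headings

variable {I ι : Type*} {edges : ι → Finset I} {σ τ : ι → I} {c : I → ℕ}

/-- The relation directing every hyperedge from its head to its other nodes. Its order-reversing
colorings are those giving every head the top color of its hyperedge. -/
def HeadsOver (edges : ι → Finset I) (σ : ι → I) (i j : I) : Prop :=
  ∃ a, σ a = i ∧ j ∈ edges a ∧ j ≠ i

lemma compatible_iff_headsOver :
    Compatible edges σ c ↔ ∀ i j, HeadsOver edges σ i j → c j ≤ c i := by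
  constructor
  · rintro hc _ j ⟨a, rfl, hj, -⟩
    exact hc a j hj
  · intro hc a j hj
    obtain rfl | hne := eq_or_ne j (σ a)
    · exact le_rfl
    · exact hc _ _ ⟨a, rfl, hj, hne⟩

lemma wellFounded_headsOver [Finite I] (hσ : ¬ HasOrientedCycle edges σ) :
    WellFounded (HeadsOver edges σ) := by
  rw [wellFounded_iff_isEmpty_descending_chain]
  refine ⟨fun ⟨f, hf⟩ => hσ ?_⟩
  choose e hσe hmem hne using hf
  obtain ⟨p, q, hpq, hfpq⟩ : ∃ p q, p < q ∧ f p = f q := by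
    obtain ⟨p, q, hpq, hfpq⟩ := Finite.exists_ne_map_eq_of_infinite f
    obtain h | h := hpq.lt_or_gt
    exacts [⟨p, q, h, hfpq⟩, ⟨q, p, h, hfpq.symm⟩]
  refine ⟨q - p, fun j => e (p + j), by omega, fun j hj => ?_⟩
  have hmod : f (p + (j + 1) % (q - p)) = f (p + j + 1) := by
    obtain h | h : j + 1 < q - p ∨ j + 1 = q - p := by omega
    · rw [Nat.mod_eq_of_lt h, add_assoc]
    · rw [h, Nat.mod_self, add_zero, hfpq]
      congr 1
      omega
  simp only [hσe, ← hmod]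
  exact ⟨hmem _, hne _⟩

lemma not_hasOrientedCycle_of_strict (hc : ∀ i j, HeadsOver edges σ i j → c j < c i) :
    ¬ HasOrientedCycle edges σ := by
  rintro ⟨l, a, hl, hcyc⟩
  obtain ⟨j, hj, hmax⟩ := Finset.exists_max_image (Finset.range l) (fun j => c (σ (a j)))
    ⟨0, Finset.mem_range.2 hl⟩
  refine (hmax ((j + 1) % l) (Finset.mem_range.2 (Nat.mod_lt _ hl))).not_gt ?_
  exact hc _ _ ⟨_, rfl, hcyc j (Finset.mem_range.1 hj)⟩

lemma heading_eq_of_strict (hσ : IsHeading edges σ) (hτ : IsHeading edges τ)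
    (hσc : ∀ i j, HeadsOver edges σ i j → c j < c i)
    (hτc : ∀ i j, HeadsOver edges τ i j → c j < c i) : σ = τ := by
  funext a
  by_contra hne
  exact (hσc _ _ ⟨a, rfl, hτ a, Ne.symm hne⟩).asymm (hτc _ _ ⟨a, rfl, hσ a, hne⟩)

lemma finite_isAcyclicHeading [Finite I] (edges : ι → Finset I) :
    Finite {σ // IsAcyclicHeading edges σ} := by
  refine Finite.of_injective (fun σ => HeadsOver edges σ.1) fun ⟨σ, hσ⟩ ⟨τ, hτ⟩ heq => ?_
  refine Subtype.ext (funext fun a => ?_)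
  by_contra hne
  have hστ : HeadsOver edges σ (σ a) (τ a) := ⟨a, rfl, hτ.1 a, Ne.symm hne⟩
  have hτσ : HeadsOver edges σ (τ a) (σ a) := by
    rw [show HeadsOver edges σ = HeadsOver edges τ from heq]
    exact ⟨a, rfl, hσ.1 a, hne⟩
  exact (wellFounded_headsOver hσ.2).asymmetric _ _ hστ hτσ

lemma isProperColoring_iff_exists_strict :
    IsProperColoring edges c ↔
      ∃ σ, IsAcyclicHeading edges σ ∧ ∀ i j, HeadsOver edges σ i j → c j < c i := by
  constructor
  · intro hc
    choose σ hσ huniq using hc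
    have hstrict : ∀ i j, HeadsOver edges σ i j → c j < c i := by
      rintro _ j ⟨a, rfl, hj, hne⟩
      refine ((hσ a).2 j hj).lt_of_ne fun heq => hne (huniq a j ⟨hj, ?_⟩)
      exact heq ▸ (hσ a).2
    exact ⟨σ, ⟨fun a => (hσ a).1, not_hasOrientedCycle_of_strict hstrict⟩, hstrict⟩
  · rintro ⟨σ, ⟨hσ, -⟩, hc⟩ a
    have hle := compatible_iff_headsOver.2 fun i j hij => (hc i j hij).le
    refine ⟨σ a, ⟨hσ a, hle a⟩, fun i ⟨hi, hmax⟩ => ?_⟩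
    by_contra hne
    exact (hmax _ (hσ a)).not_gt (hc _ _ ⟨a, rfl, hi, hne⟩)

end Headings

lemma ncard_setOf_fst_and {A B : Type*} {P : A → Prop} [Fintype {a // P a}] {Q : A → B → Prop}
    (hQ : ∀ a, {b | Q a b}.Finite) :
    {x : A × B | P x.1 ∧ Q x.1 x.2}.ncard = ∑ a : {a // P a}, {b | Q a b}.ncard := by
  have (a : {a // P a}) : Finite {b | Q a b} := hQ a
  simp only [← Nat.card_coe_set_eq]
  rw [← Nat.card_sigma]
  exact Nat.card_congr
    { toFun x := ⟨⟨x.1.1, x.2.1⟩, x.1.2, x.2.2⟩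
      invFun y := ⟨(y.1, y.2), y.1.2, y.2.2⟩ }

section Counting

variable {I ι : Type*} [Finite I] (edges : ι → Finset I) [Fintype {σ // IsAcyclicHeading edges σ}]

lemma finite_setOf_mem_Icc_and (m : ℕ) (Q : (I → ℕ) → Prop) :
    {c : I → ℕ | (∀ i, c i ∈ Finset.Icc 1 m) ∧ Q c}.Finite :=
  (Set.Finite.pi' fun _ => (Finset.Icc 1 m).finite_toSet).subset fun _ hc => hc.1

lemma ncard_isProperColoring_eq_sum (m : ℕ) :
    {c : I → ℕ | (∀ i, c i ∈ Finset.Icc 1 m) ∧ IsProperColoring edges c}.ncard =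
      ∑ σ : {σ // IsAcyclicHeading edges σ}, {c : I → ℕ | (∀ i, c i ∈ Finset.Icc 1 m) ∧
        ∀ i j, HeadsOver edges σ i j → c j < c i}.ncard := by
  rw [← ncard_setOf_fst_and (P := IsAcyclicHeading edges)
    (Q := fun σ (c : I → ℕ) => (∀ i, c i ∈ Finset.Icc 1 m) ∧
      ∀ i j, HeadsOver edges σ i j → c j < c i)
    fun σ => finite_setOf_mem_Icc_and m _]
  symm
  refine Set.ncard_congr (fun x _ => x.2) ?_ ?_ ?_
  · rintro ⟨σ, c⟩ ⟨hσ, hcm, hc⟩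
    exact ⟨hcm, isProperColoring_iff_exists_strict.2 ⟨σ, hσ, hc⟩⟩
  · rintro ⟨σ, c⟩ ⟨τ, _⟩ ⟨hσ, -, hσc⟩ ⟨hτ, -, hτc⟩ rfl
    exact Prod.ext (heading_eq_of_strict hσ.1 hτ.1 hσc hτc) rfl
  · rintro c ⟨hcm, hc⟩
    obtain ⟨σ, hσ, hσc⟩ := isProperColoring_iff_exists_strict.1 hc
    exact ⟨(σ, c), ⟨hσ, hcm, hσc⟩, rfl⟩

lemma ncard_compatible_eq_sum (m : ℕ) :
    {p : (ι → I) × (I → ℕ) | IsAcyclicHeading edges p.1 ∧ (∀ i, p.2 i ∈ Finset.Icc 1 m) ∧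
        Compatible edges p.1 p.2}.ncard =
      ∑ σ : {σ // IsAcyclicHeading edges σ}, {c : I → ℕ | (∀ i, c i ∈ Finset.Icc 1 m) ∧
        ∀ i j, HeadsOver edges σ i j → c j ≤ c i}.ncard := by
  simp only [compatible_iff_headsOver]
  exact ncard_setOf_fst_and (P := IsAcyclicHeading edges)
    (Q := fun σ (c : I → ℕ) => (∀ i, c i ∈ Finset.Icc 1 m) ∧
      ∀ i j, HeadsOver edges σ i j → c j ≤ c i)
    fun σ => finite_setOf_mem_Icc_and m _

end Counting

lemma ncard_compatible_one {I ι : Type*} (edges : ι → Finset I) :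
    {p : (ι → I) × (I → ℕ) | IsAcyclicHeading edges p.1 ∧ (∀ i, p.2 i ∈ Finset.Icc 1 1) ∧
        Compatible edges p.1 p.2}.ncard =
      {σ : ι → I | IsAcyclicHeading edges σ}.ncard := by
  refine Set.ncard_congr (fun p _ => p.1) (fun p hp => hp.1) ?_ fun σ hσ =>
    ⟨(σ, 1), ⟨hσ, fun _ => by simp, fun _ _ _ => le_rfl⟩, rfl⟩
  rintro ⟨σ, c⟩ ⟨_, c'⟩ ⟨-, hc, -⟩ ⟨-, hc', -⟩ rfl
  simp only [Finset.Icc_self, Finset.mem_singleton] at hc hc'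
  exact Prod.ext rfl (funext fun i => (hc i).trans (hc' i).symm)

theorem stmt12_general {I ι K : Type*} [Fintype I] [Field K] [CharZero K]
    (edges : ι → Finset I) (χ : Polynomial K)
    (hχ : ∀ m : ℕ, 0 < m →
      χ.eval (m : K) =
        Set.ncard {c : I → ℕ | (∀ i, c i ∈ Finset.Icc 1 m) ∧ IsProperColoring edges c}) :
    (∀ m : ℕ,
      (-1) ^ Fintype.card I * χ.eval (-(m : K)) =
        Set.ncard {p : (ι → I) × (I → ℕ) | IsAcyclicHeading edges p.1 ∧
          (∀ i, p.2 i ∈ Finset.Icc 1 m) ∧ Compatible edges p.1 p.2}) ∧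
    (Set.ncard {σ : ι → I | IsAcyclicHeading edges σ} : K) =
      (-1) ^ Fintype.card I * χ.eval (-1) := by
  have := finite_isAcyclicHeading edges
  have := Fintype.ofFinite {σ // IsAcyclicHeading edges σ}
  choose p hp using fun σ : {σ // IsAcyclicHeading edges σ} =>
    exists_orderPolynomial K (wellFounded_headsOver σ.2.2)
  obtain rfl : χ = ∑ σ, p σ := by
    refine polynomial_eq_of_eval_natCast_eq fun m hm => ?_
    rw [hχ m hm, ncard_isProperColoring_eq_sum, Polynomial.eval_finsetSum, Nat.cast_sum]
    exact Finset.sum_congr rfl fun σ _ => (hp σ m).1.symm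
  have hrecip (m : ℕ) : (-1) ^ Fintype.card I * (∑ σ, p σ).eval (-(m : K)) =
      Set.ncard {p : (ι → I) × (I → ℕ) | IsAcyclicHeading edges p.1 ∧
        (∀ i, p.2 i ∈ Finset.Icc 1 m) ∧ Compatible edges p.1 p.2} := by
    rw [ncard_compatible_eq_sum, Polynomial.eval_finsetSum, Finset.mul_sum, Nat.cast_sum]
    exact Finset.sum_congr rfl fun σ _ => (hp σ m).2
  refine ⟨hrecip, ?_⟩
  rw [← ncard_compatible_one, ← hrecip 1, Nat.cast_one]

/-- Let `h = (I, E)` be a hypergraph with `|I| = d` and `χ` the polynomial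
counting proper colorings with `m` colors at positive integers `m`. Then for every `m > 0`,
`(-1)^d χ(-m)` equals the number of compatible pairs of an acyclic heading of `h` and a
(not necessarily proper) coloring of `h` with `m` colors; in particular, the number of
acyclic headings of `h` equals `(-1)^d χ(-1)`. -/
theorem stmt12 {I : Type*} [Fintype I] [DecidableEq I] {ι : Type*} [Fintype ι]
    (edges : ι → Finset I) (hE : ∀ a, (edges a).Nonempty) (d : ℕ)
    (hd : Fintype.card I = d) (χ : Polynomial ℝ)
    (hχ : ∀ m : ℕ, 0 < m →
      χ.eval (m : ℝ) =
        Set.ncard {c : I → ℕ | (∀ i, c i ∈ Finset.Icc 1 m) ∧ IsProperColoring edges c}) :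
    (∀ m : ℕ, 0 < m →
      (-1 : ℝ) ^ d * χ.eval (-(m : ℝ)) =
        Set.ncard {p : (ι → I) × (I → ℕ) | IsAcyclicHeading edges p.1 ∧
          (∀ i, p.2 i ∈ Finset.Icc 1 m) ∧ Compatible edges p.1 p.2}) ∧
    (Set.ncard {σ : ι → I | IsAcyclicHeading edges σ} : ℝ) =
      (-1 : ℝ) ^ d * χ.eval (-1 : ℝ) := by
  subst hd
  exact (stmt12_general edges χ hχ).imp_left fun h m _ => h m
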